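/- Let φ : [0,2π] → ℝ be Lebesgue measurable and let ε > 0. Then there exists a continuous function Φ : [0,2π] → ℝ such that Φ(0) = Φ(2π) = 0, |Φ(t)| < ε for all t ∈ [0,2π], and Φ is differentiable at a.e. t ∈ [0,2π] with Φ′(t) = φ(t). -/

import Mathlib

/-!
The function `Φ` is the uniform limit of Lipschitz functions `Sₙ`, built together with an
increasing sequence of closed sets `Qₙ` that starts with `Q₀ = (0, L)ᶜ` and exhausts `ℝ` up to a null
set, in such a way that `Sₙ₊₁' = φ` a.e. on `Qₙ₊₁ \ Qₙ`. The corrections `Sₘ₊₁ - Sₘ` are bounded by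
`2⁻ᵐ` times a constant times `min 1 (dist(·, Qₘ)²)`; hence for `q ∈ Qₙ` the remainder `Φ - Sₙ` is
`O((x - q)²)`, has derivative `0` at `q`, and so `Φ' = Sₙ'` at the points of `Qₙ` where `Sₙ` is
differentiable. The bound also makes `Φ` vanish on `Q₀`, in particular at the endpoints.

One step is `exists_small_primitive`, applied to `g = φ - Sₙ'` (defined a.e., since `Sₙ` is Lipschitz).
Take a compact `K` in the complement of `Q`, of almost full measure, on which `g` is bounded, and let `F`
be the primitive of `g · 1_K`. The function `F` need not be small, but `F - F ∘ ρ` is, where `ρ` is a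
fine Lipschitz staircase close to the identity (`exists_staircase`): it is supported near `K`, hence
away from `Q`, and `F ∘ ρ` is locally constant off a set of small measure, where subtracting it does not
change the derivative.
-/

open MeasureTheory Set Real

open Filter Topology
open scoped NNReal ENNReal

/-! ### Staircases -/

/-- A finite sum of ramps: for `0 < w ≤ s`, `staircase s w n` climbs by `s` on each interval
`[k s, k s + w]`, `k < n`, and is constant on every interval complementary to these. -/
noncomputable def staircase (s w : ℝ) (n : ℕ) (x : ℝ) : ℝ :=
  ∑ k ∈ Finset.range n, s * max 0 (min 1 ((x - k * s) / w))

lemma staircase_of_le {s w : ℝ} (hw : 0 < w) (hws : w ≤ s) (n : ℕ) {x : ℝ} (hx : n * s ≤ x) :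
    staircase s w n x = n * s := by
  have hs : 0 < s := hw.trans_le hws
  have : ∀ k ∈ Finset.range n, s * max 0 (min 1 ((x - k * s) / w)) = s := by
    intro k hk
    have hk' : (k : ℝ) + 1 ≤ n := by exact_mod_cast Finset.mem_range.1 hk
    have : 1 ≤ (x - k * s) / w := by
      rw [le_div_iff₀ hw]
      nlinarith
    rw [min_eq_left this]
    simp
  rw [staircase, Finset.sum_congr rfl this]
  simp

lemma staircase_of_nonpos {s w : ℝ} (hw : 0 < w) (hs : 0 < s) (n : ℕ) {x : ℝ} (hx : x ≤ 0) :
    staircase s w n x = 0 := by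
  refine Finset.sum_eq_zero fun k _ => ?_
  have : (x - k * s) / w ≤ 0 := div_nonpos_of_nonpos_of_nonneg
    (by have : 0 ≤ (k : ℝ) * s := by positivity
        linarith) hw.le
  rw [max_eq_left ((min_le_right _ _).trans this), mul_zero]

lemma abs_staircase_sub_le {s w : ℝ} (hw : 0 < w) (hws : w ≤ s) (n : ℕ) {x : ℝ} (h0 : 0 ≤ x)
    (hx : x ≤ n * s) : |staircase s w n x - x| ≤ s := by
  have hs : 0 < s := hw.trans_le hws
  induction n with
  | zero =>
    have : x = 0 := le_antisymm (by simpa using hx) h0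
    simp [staircase, this, hs.le]
  | succ n ih =>
    have hsucc : staircase s w (n + 1) x
        = staircase s w n x + s * max 0 (min 1 ((x - n * s) / w)) :=
      Finset.sum_range_succ _ _
    rw [hsucc]
    rcases le_total x (n * s) with h | h
    · have : (x - n * s) / w ≤ 0 := div_nonpos_of_nonpos_of_nonneg (by linarith) hw.le
      rw [max_eq_left ((min_le_right _ _).trans this), mul_zero, add_zero]
      exact ih h
    · rw [staircase_of_le hw hws n h]
      push_cast at hx
      have h1 : 0 ≤ max 0 (min 1 ((x - n * s) / w)) := le_max_left _ _
      have h2 : max 0 (min 1 ((x - n * s) / w)) ≤ 1 := max_le zero_le_one (min_le_left _ _)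
      rw [abs_le]
      constructor <;> nlinarith

lemma exists_lipschitzWith_staircase (s w : ℝ) (n : ℕ) :
    ∃ C, LipschitzWith C (staircase s w n) := by
  induction n with
  | zero => exact ⟨0, LipschitzWith.const (0 : ℝ)⟩
  | succ n ih =>
    obtain ⟨C, hC⟩ := ih
    have h1 : LipschitzWith (‖w⁻¹‖₊) fun x : ℝ => (x - n * s) / w := by
      refine LipschitzWith.of_dist_le_mul fun x y => le_of_eq ?_
      rw [Real.dist_eq, Real.dist_eq, ← sub_div, sub_sub_sub_cancel_right, div_eq_mul_inv, abs_mul,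
        mul_comm]
      rfl
    have h2 := ((h1.const_min 1).const_max 0)
    have h3 : LipschitzWith (‖s‖₊) fun x : ℝ => s * x := by
      refine LipschitzWith.of_dist_le_mul fun x y => le_of_eq ?_
      rw [Real.dist_eq, Real.dist_eq, ← mul_sub, abs_mul]
      rfl
    have hsucc : staircase s w (n + 1)
        = fun x => staircase s w n x + s * max 0 (min 1 ((x - n * s) / w)) :=
      funext fun x => Finset.sum_range_succ _ _
    rw [hsucc]
    exact ⟨_, hC.add (h3.comp h2)⟩

lemma staircase_eventuallyEq {s w : ℝ} (hw : 0 < w) (n : ℕ) {x : ℝ}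
    (hx : ∀ k < n, x ∉ Icc (k * s) (k * s + w)) :
    ∀ᶠ y in 𝓝 x, staircase s w n y = staircase s w n x := by
  have : ∀ k ∈ Finset.range n, ∀ᶠ y in 𝓝 x,
      s * max 0 (min 1 ((y - k * s) / w)) = s * max 0 (min 1 ((x - k * s) / w)) := by
    intro k hk
    have hxk := hx k (Finset.mem_range.1 hk)
    have low : ∀ y : ℝ, y < k * s → max 0 (min 1 ((y - k * s) / w)) = 0 := fun y hy =>
      max_eq_left ((min_le_right _ _).trans
        (div_nonpos_of_nonpos_of_nonneg (by linarith) hw.le))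
    have high : ∀ y : ℝ, k * s + w < y → max 0 (min 1 ((y - k * s) / w)) = 1 := fun y hy => by
      rw [min_eq_left ((le_div_iff₀ hw).2 (by linarith))]
      simp
    rcases lt_or_ge x (k * s) with h | h
    · filter_upwards [Iio_mem_nhds h] with y hy
      rw [low y hy, low x h]
    · have h' : k * s + w < x := by
        by_contra hc
        exact hxk ⟨h, not_lt.1 hc⟩
      filter_upwards [Ioi_mem_nhds h'] with y hy
      rw [high y hy, high x h']
  filter_upwards [(Filter.eventually_all_finset _).2 this] with y hy
  exact Finset.sum_congr rfl hy

/-- A Lipschitz map uniformly close to the identity on `[0, L]` which is locally constant off a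
closed set of small measure. -/
lemma exists_staircase {L η δ : ℝ} (hL : 0 < L) (hη : 0 < η) (hδ : 0 < δ) :
    ∃ (ρ : ℝ → ℝ) (B : Set ℝ), (∃ C, LipschitzWith C ρ) ∧ IsClosed B ∧
      volume B ≤ ENNReal.ofReal δ ∧ (∀ x ∉ B, ∀ᶠ y in 𝓝 x, ρ y = ρ x) ∧
      (∀ x ≤ 0, ρ x = 0) ∧ (∀ x, L ≤ x → ρ x = L) ∧ (∀ x ∈ Icc 0 L, |ρ x - x| ≤ η) := by
  obtain ⟨n, hn⟩ := exists_nat_gt (L / η)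
  have hn0 : (0 : ℝ) < n := (by positivity : (0 : ℝ) < L / η).trans hn
  have hs : 0 < L / n := by positivity
  have hns : n * (L / n) = L := by field_simp
  have hsη : L / n ≤ η := by
    rw [div_lt_iff₀ hη] at hn
    rw [div_le_iff₀ hn0]
    linarith
  set s := L / n
  have hw : 0 < min s (δ / n) := lt_min hs (by positivity)
  have hws : min s (δ / n) ≤ s := min_le_left _ _
  have hwδ : n * min s (δ / n) ≤ δ := by
    calc n * min s (δ / n) ≤ n * (δ / n) := by gcongr; exact min_le_right _ _
      _ = δ := by field_simp
  set w := min s (δ / n)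
  refine ⟨staircase s w n, ⋃ k ∈ Finset.range n, Icc (k * s) (k * s + w),
    exists_lipschitzWith_staircase s w n, ?_, ?_, ?_, ?_, ?_, ?_⟩
  · exact isClosed_biUnion_finset fun k _ => isClosed_Icc
  · calc volume (⋃ k ∈ Finset.range n, Icc (k * s) (k * s + w))
        ≤ ∑ k ∈ Finset.range n, volume (Icc (k * s) (k * s + w)) :=
          measure_biUnion_finset_le _ _
      _ = ENNReal.ofReal (n * w) := by
          simp [ENNReal.ofReal_mul hn0.le]
      _ ≤ ENNReal.ofReal δ := ENNReal.ofReal_le_ofReal hwδ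
  · intro x hx
    exact staircase_eventuallyEq hw n fun k hk hxk => hx (by
      simp only [mem_iUnion, Finset.mem_range]
      exact ⟨k, hk, hxk⟩)
  · exact fun x hx => staircase_of_nonpos hw hs n hx
  · intro x hx
    rw [staircase_of_le hw hws n (by rwa [hns]), hns]
  · intro x hx
    exact (abs_staircase_sub_le hw hws n hx.1 (by rw [hns]; exact hx.2)).trans hsη

/-! ### Small functions with prescribed derivative on a large set -/

/-- A weak form of Luzin's theorem: a measurable function is bounded on a compact set filling most of
a given set of finite measure. -/
lemma exists_compact_bounded {U : Set ℝ} (hU : MeasurableSet U) (hfin : volume U ≠ ∞)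
    {g : ℝ → ℝ} (hg : Measurable g) {δ : ℝ≥0∞} (hδ : 0 < δ) :
    ∃ (K : Set ℝ) (M : ℝ), IsCompact K ∧ K ⊆ U ∧ 0 ≤ M ∧ (∀ x ∈ K, |g x| ≤ M) ∧
      volume (U \ K) ≤ δ + δ := by
  have hA : ∀ m : ℕ, MeasurableSet (U ∩ {x | |g x| ≤ m}) := fun m =>
    hU.inter (measurableSet_le (continuous_abs.measurable.comp hg) measurable_const)
  have hT : Tendsto (fun m : ℕ => volume (U \ (U ∩ {x | |g x| ≤ m}))) atTop (𝓝 0) := by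
    have hempty : ⋂ m : ℕ, U \ (U ∩ {x | |g x| ≤ m}) = ∅ := by
      refine eq_empty_of_forall_notMem fun x hx => ?_
      rw [mem_iInter] at hx
      obtain ⟨m, hm⟩ := exists_nat_ge |g x|
      exact (hx m).2 ⟨(hx m).1, hm⟩
    have := tendsto_measure_iInter_atTop (μ := volume)
      (s := fun m : ℕ => U \ (U ∩ {x | |g x| ≤ m}))
      (fun m => (hU.diff (hA m)).nullMeasurableSet) ?_
      ⟨0, ne_top_of_le_ne_top hfin (measure_mono sdiff_subset)⟩
    · rwa [hempty, measure_empty] at this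
    · intro m m' hmm x hx
      refine ⟨hx.1, fun h => hx.2 ⟨h.1, ?_⟩⟩
      exact (show |g x| ≤ m from h.2).trans (Nat.cast_le.2 hmm)
  obtain ⟨m, hm⟩ := (hT.eventually (gt_mem_nhds hδ)).exists
  obtain ⟨K, hKA, hK, hKδ⟩ := (hA m).exists_isCompact_sdiff_lt
    (ne_top_of_le_ne_top hfin (measure_mono inter_subset_left)) hδ.ne'
  refine ⟨K, m, hK, hKA.trans inter_subset_left, m.cast_nonneg, fun x hx => (hKA hx).2, ?_⟩
  calc volume (U \ K) ≤ volume ((U \ (U ∩ {x | |g x| ≤ m})) ∪ ((U ∩ {x | |g x| ≤ m}) \ K)) := by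
        refine measure_mono fun x hx => ?_
        by_cases h : x ∈ U ∩ {x | |g x| ≤ m}
        · exact Or.inr ⟨h, hx.2⟩
        · exact Or.inl ⟨hx.1, h⟩
    _ ≤ _ := (measure_union_le _ _).trans (add_le_add hm.le hKδ.le)

/-- One step of the construction. The quadratic bound near `Q` ensures that adding `G` changes
neither values nor derivatives at the points of `Q`. -/
lemma exists_small_primitive {L : ℝ} (hL : 0 < L) {Q : Set ℝ} (hQ : IsClosed Q)
    (hQL : Qᶜ ⊆ Ioo 0 L) {g : ℝ → ℝ} (hg : Measurable g) {ε δ : ℝ} (hε : 0 < ε) (hδ : 0 < δ) :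
    ∃ (G : ℝ → ℝ) (Q' : Set ℝ), IsClosed Q' ∧ Q ⊆ Q' ∧ volume Q'ᶜ ≤ ENNReal.ofReal δ ∧
      (∃ C, LipschitzWith C G) ∧ (∀ x, |G x| ≤ ε) ∧
      (∀ q ∈ Q, ∀ x, |G x| ≤ ε * (x - q) ^ 2) ∧
      ∀ᵐ x, x ∈ Q' → x ∉ Q → HasDerivAt G (g x) x := by
  have hfin : volume Qᶜ ≠ ∞ :=
    ne_top_of_le_ne_top (by simp) (measure_mono hQL)
  have hδ4 : 0 < ENNReal.ofReal (δ / 4) := ENNReal.ofReal_pos.2 (by positivity)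
  obtain ⟨K, M, hK, hKQ, hM, hgM, hKδ⟩ :=
    exists_compact_bounded hQ.isOpen_compl.measurableSet hfin hg hδ4
  obtain ⟨r, hr, hrKQ⟩ : ∃ r : ℝ, 0 < r ∧ ∀ p ∈ K, ∀ q ∈ Q, r ≤ |p - q| := by
    obtain ⟨r, hr, h⟩ := Metric.exists_pos_forall_lt_edist hK hQ
      (disjoint_left.2 fun x hx hxQ => hKQ hx hxQ)
    refine ⟨r, hr, fun p hp q hq => ?_⟩
    have := h p hp q hq
    rw [edist_nndist, ENNReal.coe_lt_coe] at this
    rw [← Real.dist_eq]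
    exact_mod_cast this.le
  obtain ⟨η, hη, hηr, hη1, hη2⟩ : ∃ η : ℝ, 0 < η ∧ η ≤ r / 2 ∧ M * η ≤ ε ∧
      M * η ≤ ε * (r / 2) ^ 2 := by
    have hM1 : 0 < M + 1 := by linarith
    have key : ∀ c : ℝ, 0 < c → M * (c / (M + 1)) ≤ c := fun c hc => by
      rw [mul_div_assoc', div_le_iff₀ hM1]
      nlinarith
    refine ⟨min (r / 2) (min (ε / (M + 1)) (ε * (r / 2) ^ 2 / (M + 1))), by positivity,
      min_le_left _ _, ?_, ?_⟩
    · exact (mul_le_mul_of_nonneg_left ((min_le_right _ _).trans (min_le_left _ _)) hM).trans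
        (key _ hε)
    · exact (mul_le_mul_of_nonneg_left ((min_le_right _ _).trans (min_le_right _ _)) hM).trans
        (key _ (by positivity))
  obtain ⟨ρ, B, ⟨Cρ, hρ⟩, hB, hBδ, hρB, hρ0, hρL, hρη⟩ :=
    exists_staircase hL hη (by positivity : 0 < δ / 4)
  -- The exceptional set `B` of the staircase is discarded, so that `F ∘ ρ` is locally constant on
  -- `K \ B`.
  have hKB : MeasurableSet (K \ B) := hK.measurableSet.diff hB.measurableSet
  obtain ⟨K', hK'K, hK', hK'δ⟩ := hKB.exists_isCompact_sdiff_lt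
    (ne_top_of_le_ne_top hfin (measure_mono (sdiff_subset.trans hKQ))) hδ4.ne'
  set h : ℝ → ℝ := K.indicator g with hh
  have hhM : ∀ x, ‖h x‖ ≤ M := fun x => by
    by_cases hx : x ∈ K
    · simpa [hh, hx] using hgM x hx
    · simpa [hh, hx] using hM
  have hhm : Measurable h := hg.indicator hK.measurableSet
  have hloc : LocallyIntegrable h volume := by
    refine (locallyIntegrable_const M).mono hhm.aestronglyMeasurable (ae_of_all _ fun x => ?_)
    exact (hhM x).trans (le_abs_self M)
  have hint : ∀ a b, IntervalIntegrable h volume a b := fun a b =>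
    intervalIntegrable_iff.2
      ((hloc.integrableOn_isCompact isCompact_uIcc).mono_set uIoc_subset_uIcc)
  set F : ℝ → ℝ := fun x => ∫ t in (0 : ℝ)..x, h t with hF
  have hFsub : ∀ x y, F x - F y = ∫ t in y..x, h t := fun x y =>
    intervalIntegral.integral_interval_sub_left (hint _ _) (hint _ _)
  have hFM : ∀ x y, |F x - F y| ≤ M * |x - y| := fun x y => by
    rw [hFsub]
    exact intervalIntegral.norm_integral_le_of_norm_le_const fun t _ => hhM t
  have hFlip : LipschitzWith ⟨M, hM⟩ F := LipschitzWith.of_dist_le_mul hFM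
  -- `F x = F (ρ x)` unless `K` meets the short interval between `x` and `ρ x`.
  have hG : ∀ x, F x - F (ρ x) = 0 ∨
      (|F x - F (ρ x)| ≤ M * η ∧ ∃ p ∈ K, |x - p| ≤ η) := by
    intro x
    by_cases hx : ∃ p ∈ K, p ∈ uIcc (ρ x) x
    · obtain ⟨p, hp, hpx⟩ := hx
      have hpL := hQL (hKQ hp)
      have hxL : x ∈ Icc 0 L := by
        constructor
        · by_contra hc
          rw [hρ0 x (by linarith), uIcc_of_ge (by linarith)] at hpx
          linarith [hpx.2, hpL.1]
        · by_contra hc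
          rw [hρL x (by linarith), uIcc_of_le (by linarith)] at hpx
          linarith [hpx.1, hpL.2]
      have hη' := hρη x hxL
      right
      constructor
      · refine (hFM _ _).trans ?_
        rw [abs_sub_comm]
        gcongr
      · refine ⟨p, hp, ?_⟩
        have := abs_sub_right_of_mem_uIcc hpx
        rw [abs_sub_comm (ρ x)] at hη'
        exact this.trans hη'
    · left
      rw [hFsub]
      refine (intervalIntegral.integral_congr (g := fun _ => (0 : ℝ)) fun t ht => ?_).trans (by simp)
      exact indicator_of_notMem (fun htK => hx ⟨t, htK, ht⟩) g
  refine ⟨fun x => F x - F (ρ x), Q ∪ K', hQ.union hK'.isClosed, subset_union_left, ?_,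
    ⟨_, hFlip.sub (hFlip.comp hρ)⟩, ?_, ?_, ?_⟩
  · calc volume (Q ∪ K')ᶜ ≤ volume ((Qᶜ \ K) ∪ B ∪ ((K \ B) \ K')) := by
          refine measure_mono fun x hx => ?_
          simp only [mem_compl_iff, mem_union, Set.mem_sdiff] at hx ⊢
          tauto
      _ ≤ (ENNReal.ofReal (δ / 4) + ENNReal.ofReal (δ / 4)) + ENNReal.ofReal (δ / 4)
          + ENNReal.ofReal (δ / 4) :=
        (measure_union_le _ _).trans (add_le_add ((measure_union_le _ _).trans
          (add_le_add hKδ hBδ)) hK'δ.le)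
      _ = ENNReal.ofReal δ := by
        have : 0 ≤ δ / 4 := by positivity
        rw [← ENNReal.ofReal_add, ← ENNReal.ofReal_add, ← ENNReal.ofReal_add] <;> try positivity
        congr 1
        ring
  · intro x
    rcases hG x with h0 | ⟨h1, -⟩
    · simp only [h0, abs_zero]
      exact hε.le
    · exact h1.trans hη1
  · intro q hq x
    rcases hG x with h0 | ⟨h1, p, hp, hxp⟩
    · simp only [h0, abs_zero]
      positivity
    · refine (h1.trans hη2).trans ?_
      have h3 : r / 2 ≤ |x - q| := by
        have := hrKQ p hp q hq
        have := abs_sub_le p x q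
        rw [abs_sub_comm p x] at this
        linarith
      rw [← sq_abs (x - q)]
      gcongr
  · filter_upwards [_root_.LocallyIntegrable.ae_hasDerivAt_integral hloc] with x hx hxQ' hxQ
    have hxK' : x ∈ K \ B := hK'K (hxQ'.resolve_left hxQ)
    have h1 : HasDerivAt F (g x) x := by
      have := hx 0
      rwa [hh, indicator_of_mem hxK'.1] at this
    have h2 : HasDerivAt (fun y => F (ρ y)) 0 x := by
      refine (hasDerivAt_const x (F (ρ x))).congr_of_eventuallyEq ?_
      filter_upwards [hρB x hxK'.2] with y hy
      rw [hy]
    have h3 := h1.sub h2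
    rwa [sub_zero] at h3

/-! ### Iteration and passage to the limit -/

/-- The stages of the construction: a closed set containing the complement of `(0, L)`, on which the
construction is finished, and the Lipschitz function built so far. -/
def Stage (L : ℝ) : Type :=
  {p : Set ℝ × (ℝ → ℝ) // IsClosed p.1 ∧ p.1ᶜ ⊆ Ioo 0 L ∧ ∃ C, LipschitzWith C p.2}

/-- Adding to `p.1.2` a small function with derivative `φ - deriv p.1.2` a.e. on the part newly added
to the closed set gives total derivative `φ` there. -/
lemma exists_next_stage {L : ℝ} (hL : 0 < L) {φ : ℝ → ℝ} (hφ : Measurable φ) {ε δ : ℝ} (hε : 0 < ε)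
    (hδ : 0 < δ) (p : Stage L) :
    ∃ p' : Stage L, p.1.1 ⊆ p'.1.1 ∧ volume p'.1.1ᶜ ≤ ENNReal.ofReal δ ∧
      (∀ x, dist (p.1.2 x) (p'.1.2 x) ≤ ε) ∧
      (∀ q ∈ p.1.1, ∀ x, dist (p.1.2 x) (p'.1.2 x) ≤ ε * (x - q) ^ 2) ∧
      ∀ᵐ x, x ∈ p'.1.1 → x ∉ p.1.1 → HasDerivAt p'.1.2 (φ x) x := by
  obtain ⟨⟨Q, S⟩, hQ, hQL, C, hS⟩ := p
  -- The junk values of `deriv S` only matter on the null set where `S` is not differentiable.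
  obtain ⟨G, Q', hQ', hQQ', hδ', ⟨C', hG⟩, hGε, hGq, hGd⟩ :=
    exists_small_primitive hL hQ hQL (hφ.sub (measurable_deriv S)) hε hδ
  refine ⟨⟨(Q', fun x => S x + G x), hQ', (compl_subset_compl.2 hQQ').trans hQL, _, hS.add hG⟩,
    hQQ', hδ', ?_, ?_, ?_⟩
  · intro x
    simpa [Real.dist_eq] using hGε x
  · intro q hq x
    simpa [Real.dist_eq] using hGq q hq x
  · filter_upwards [hGd, hS.ae_differentiableAt_real] with x hx hSx h1 h2
    have h3 := hSx.hasDerivAt.add (hx h1 h2)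
    rwa [Pi.sub_apply, add_sub_cancel] at h3

/-- The limit of the stages, on an interval `[0, L]`; outside `(0, L)` the function vanishes, so
continuity holds on all of `ℝ`. -/
theorem exists_primitive {L : ℝ} (hL : 0 < L) {φ : ℝ → ℝ} (hφ : Measurable φ) {C : ℝ} (hC : 0 < C) :
    ∃ Φ : ℝ → ℝ, Continuous Φ ∧ Φ 0 = 0 ∧ Φ L = 0 ∧ (∀ x, |Φ x| ≤ C) ∧
      ∀ᵐ x, x ∈ Ioo 0 L → HasDerivAt Φ (φ x) x := by
  choose next hsub hvol hdist hsq hder using fun (n : ℕ) (p : Stage L) =>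
    exists_next_stage hL hφ (by positivity : 0 < C / 2 / 2 ^ n)
      (by positivity : (0 : ℝ) < (1 / 2) ^ n) p
  let p : ℕ → Stage L := fun n => Nat.rec
    ⟨((Ioo 0 L)ᶜ, fun _ => 0), isOpen_Ioo.isClosed_compl, by simp, 0, LipschitzWith.const 0⟩
    (fun n p => next n p) n
  let Q : ℕ → Set ℝ := fun n => (p n).1.1
  let S : ℕ → ℝ → ℝ := fun n => (p n).1.2
  have hS0 : ∀ x, S 0 x = 0 := fun _ => rfl
  have hQ0 : Q 0 = (Ioo 0 L)ᶜ := rfl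
  have hQmono : Monotone Q := monotone_nat_of_le_succ fun n => hsub n (p n)
  have hSd : ∀ x n, dist (S n x) (S (n + 1) x) ≤ C / 2 / 2 ^ n := fun x n => hdist n (p n) x
  have hlim : ∀ x, ∃ l, Tendsto (fun n => S n x) atTop (𝓝 l) := fun x =>
    cauchySeq_tendsto_of_complete (cauchySeq_of_le_geometric_two (hSd x))
  choose Φ hΦ using hlim
  have hΦS : ∀ n x, dist (S n x) (Φ x) ≤ C / 2 ^ n := fun n x =>
    dist_le_of_le_geometric_two_of_tendsto (hSd x) (hΦ x) n
  have hΦq : ∀ n, ∀ q ∈ Q n, ∀ x, dist (S n x) (Φ x) ≤ C * (x - q) ^ 2 := by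
    intro n q hq x
    -- `q` belongs to every later `Q (m + n)`, so the quadratic bounds can be summed.
    have h1 : ∀ m, dist (S (m + n) x) (S (m + 1 + n) x) ≤ C * (x - q) ^ 2 / 2 / 2 ^ m := by
      intro m
      have := hsq (m + n) (p (m + n)) q (hQmono (Nat.le_add_left n m) hq) x
      rw [show m + 1 + n = m + n + 1 by ring]
      refine this.trans ?_
      rw [show C * (x - q) ^ 2 / 2 / 2 ^ m = C / 2 / 2 ^ m * (x - q) ^ 2 by ring]
      gcongr
      · norm_num
      · omega
    have h2 := dist_le_of_le_geometric_two_of_tendsto₀ (f := fun m => S (m + n) x) h1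
      ((tendsto_add_atTop_iff_nat n).2 (hΦ x))
    simpa using h2
  have hQ0Φ : ∀ x ∈ Q 0, Φ x = 0 := fun x hx => by
    have := hΦq 0 x hx x
    rw [hS0, sub_self] at this
    simpa [Real.dist_eq] using this
  refine ⟨Φ, ?_, hQ0Φ 0 (by simp [hQ0]), hQ0Φ L (by simp [hQ0]), ?_, ?_⟩
  · have : TendstoUniformly S Φ atTop := by
      rw [Metric.tendstoUniformly_iff]
      intro e he
      have h0 : Tendsto (fun n : ℕ => C / 2 ^ n) atTop (𝓝 0) := by
        simpa [div_eq_mul_inv] using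
          (tendsto_pow_atTop_nhds_zero_of_lt_one (by norm_num : (0 : ℝ) ≤ 2⁻¹)
            (by norm_num)).const_mul C
      filter_upwards [h0.eventually (gt_mem_nhds he)] with n hn x
      rw [dist_comm]
      exact (hΦS n x).trans_lt hn
    exact this.continuous (Frequently.of_forall fun n =>
      let ⟨_, h⟩ := (p n).2.2.2
      h.continuous)
  · intro x
    have := hΦS 0 x
    rw [hS0, dist_comm, Real.dist_eq] at this
    simpa using this
  · have hcover : ∀ᵐ x, ∃ n, x ∈ Q n := by
      rw [ae_iff]
      have h0 : Tendsto (fun n : ℕ => ENNReal.ofReal ((1 / 2) ^ n)) atTop (𝓝 0) := by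
        rw [← ENNReal.ofReal_zero]
        exact (ENNReal.continuous_ofReal.tendsto 0).comp
          (tendsto_pow_atTop_nhds_zero_of_lt_one (by norm_num : (0 : ℝ) ≤ 1 / 2) (by norm_num))
      refine le_antisymm (ge_of_tendsto' h0 fun n => ?_) zero_le
      refine (measure_mono fun x hx => ?_).trans (hvol n (p n))
      exact fun hxn => hx ⟨n + 1, hxn⟩
    filter_upwards [hcover, ae_all_iff.2 fun n => hder n (p n)] with x hx hxd hx0
    classical
    obtain ⟨n, hn, hmin⟩ : ∃ n, x ∈ Q (n + 1) ∧ x ∉ Q n := by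
      obtain ⟨m, hm⟩ : ∃ m, Nat.find hx = m + 1 := Nat.exists_eq_succ_of_ne_zero fun h0 => by
        have := Nat.find_spec hx
        rw [h0, hQ0] at this
        exact this hx0
      exact ⟨m, hm ▸ Nat.find_spec hx, Nat.find_min hx (by omega)⟩
    -- `Φ = S (n + 1) + O((y - x)²)` near `x`, because `x ∈ Q (n + 1)`.
    have hd : HasDerivAt (S (n + 1)) (φ x) x := hxd n hn hmin
    have hrem : HasDerivAt (fun y => Φ y - S (n + 1) y) 0 x := by
      have hb : ∀ y, |Φ y - S (n + 1) y| ≤ C * (y - x) ^ 2 := fun y => by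
        rw [← Real.dist_eq, dist_comm]
        exact hΦq (n + 1) x hn y
      have hx' : Φ x - S (n + 1) x = 0 := by simpa using hb x
      rw [hasDerivAt_iff_isLittleO]
      have h1 : (fun y => Φ y - S (n + 1) y) =O[𝓝 x] fun y => ‖y - x‖ ^ 2 :=
        Asymptotics.IsBigO.of_bound C (Eventually.of_forall fun y => by
          simpa using hb y)
      have h2 := h1.trans_isLittleO (Asymptotics.isLittleO_pow_sub_sub x one_lt_two)
      simpa [hx'] using h2
    have hsum := hd.add hrem
    rw [add_zero] at hsum
    exact hsum.congr_of_eventuallyEq (Eventually.of_forall fun y => by simp)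

/-- For any Lebesgue measurable `φ : [0,2π] → ℝ` and any `ε > 0` there is a
continuous `Φ : [0,2π] → ℝ` with `Φ(0) = Φ(2π) = 0`, `|Φ| < ε` on `[0,2π]`, and
`Φ' = φ` a.e. on `[0,2π]`. -/
theorem luzin_antiderivative (φ : ℝ → ℝ)
    (hφ : Measurable ((Set.Icc (0:ℝ) (2*π)).restrict φ))
    (ε : ℝ) (hε : 0 < ε) :
    ∃ Φ : ℝ → ℝ,
      ContinuousOn Φ (Set.Icc 0 (2*π)) ∧
      Φ 0 = 0 ∧ Φ (2*π) = 0 ∧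
      (∀ t ∈ Set.Icc (0:ℝ) (2*π), |Φ t| < ε) ∧
      (∀ᵐ t ∂(volume.restrict (Set.Icc (0:ℝ) (2*π))), HasDerivAt Φ (φ t) t) := by
  have hm : Measurable ((Icc (0 : ℝ) (2 * π)).indicator φ) := by
    refine measurable_of_restrict_of_restrict_compl (s := Icc (0 : ℝ) (2 * π)) measurableSet_Icc ?_ ?_
    · convert hφ using 1
      ext x
      exact indicator_of_mem x.2 φ
    · convert measurable_const (a := (0 : ℝ)) using 1
      ext x
      exact indicator_of_notMem x.2 φ
  obtain ⟨Φ, hc, h0, hL, hb, hd⟩ := exists_primitive two_pi_pos hm (half_pos hε)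
  refine ⟨Φ, hc.continuousOn, h0, hL, fun t _ => (hb t).trans_lt (half_lt_self hε), ?_⟩
  rw [← restrict_Ioo_eq_restrict_Icc, ae_restrict_iff' measurableSet_Ioo]
  filter_upwards [hd] with t ht htI
  simpa [indicator_of_mem (Ioo_subset_Icc_self htI)] using ht htI
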